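/- Let D be a nonempty compact convex subset of ℝ^d (with the L∞ norm), let F₀, F₁ : D → D be continuous, and for t ∈ [0,1] let F_t = (1−t)F₀ + tF₁ be the linear homotopy. Then for every ε > 0 there exist a natural number k and finite sequences t_0, t_1, …, t_k ∈ [0,1] and x_0, x_1, …, x_k ∈ D with t_0 = 0, t_k = 1, such that ‖F_{t_i}(x_i) − x_i‖_∞ ≤ ε for every i, and |t_{i+1} − t_i| ≤ ε and ‖x_{i+1} − x_i‖_∞ ≤ ε for every i < k; that is, an ε-approximate fixpoint of F₀ is connected to an ε-approximate fixpoint of F₁ by a chain of ε-approximate fixpoints of intermediate maps with consecutive members at most ε apart. -/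

import Mathlib

open Set Metric MeasureTheory
open scoped NNReal

/-- `det (1 + t A)` is a polynomial in `t` of degree at most the dimension. -/
theorem LinearMap.exists_polynomial_eval_eq_det_one_add_smul {E : Type*} [AddCommGroup E]
    [Module ℝ E] [FiniteDimensional ℝ E] (A : E →ₗ[ℝ] E) :
    ∃ p : Polynomial ℝ, p.natDegree ≤ Module.finrank ℝ E ∧
      ∀ t : ℝ, p.eval t = LinearMap.det (1 + t • A) := by
  let b := Module.finBasis ℝ E
  let M := LinearMap.toMatrix b b A
  refine ⟨Matrix.det ((Polynomial.X : Polynomial ℝ) • M.map Polynomial.C +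
    (1 : Matrix _ _ ℝ).map Polynomial.C), ?_, fun t => ?_⟩
  · simpa using Polynomial.natDegree_det_X_add_C_le M 1
  · rw [← LinearMap.det_toMatrix b, ← Polynomial.coe_evalRingHom, RingHom.map_det]
    congr 1
    ext i j
    simp only [map_add, map_smul, LinearMap.toMatrix_one, RingHom.mapMatrix_apply,
      Matrix.map_apply, Matrix.add_apply, Matrix.smul_apply, smul_eq_mul,
      Polynomial.coe_evalRingHom, Polynomial.eval_mul, Polynomial.eval_X,
      Polynomial.eval_C, M]
    ring

theorem LinearMap.det_one_add_smul_ne_zero {E : Type*} [NormedAddCommGroup E]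
    [NormedSpace ℝ E] [FiniteDimensional ℝ E] (A : E →L[ℝ] E) {t : ℝ} (h : ‖t • A‖ < 1) :
    LinearMap.det (1 + t • (A : E →ₗ[ℝ] E)) ≠ 0 := by
  rw [← isUnit_iff_ne_zero, ← LinearMap.isUnit_iff_isUnit_det, LinearMap.isUnit_iff_ker_eq_bot,
    LinearMap.ker_eq_bot']
  intro v hv
  by_contra hne
  have hv' : v = -((t • A) v) := by
    simpa [eq_neg_iff_add_eq_zero] using hv
  have h1 : ‖v‖ ≤ ‖t • A‖ * ‖v‖ := by
    calc ‖v‖ = ‖(t • A) v‖ := by conv_lhs => rw [hv', norm_neg]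
      _ ≤ _ := (t • A).le_opNorm v
  have := norm_pos_iff.2 hne
  nlinarith

theorem LinearMap.det_one_add_smul_pos {E : Type*} [NormedAddCommGroup E]
    [NormedSpace ℝ E] [FiniteDimensional ℝ E] (A : E →L[ℝ] E) {t : ℝ} (h0 : 0 ≤ t)
    (h : ‖t • A‖ < 1) :
    0 < LinearMap.det (1 + t • (A : E →ₗ[ℝ] E)) := by
  obtain ⟨p, -, hp⟩ := (A : E →ₗ[ℝ] E).exists_polynomial_eval_eq_det_one_add_smul
  by_contra! hneg
  obtain ⟨s, hs, hs0⟩ := intermediate_value_Icc' h0 p.continuous.continuousOn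
    (show (0 : ℝ) ∈ Icc (p.eval t) (p.eval 0) by simp [hp, hneg])
  refine LinearMap.det_one_add_smul_ne_zero A (t := s) ?_ ((hp s).symm.trans hs0)
  refine lt_of_le_of_lt ?_ h
  rw [norm_smul, norm_smul, Real.norm_of_nonneg hs.1, Real.norm_of_nonneg h0]
  gcongr
  exact hs.2

/-- A Lipschitz perturbation of the identity, with constant less than one and vanishing off a set,
permutes that set. -/
theorem LipschitzWith.bijOn_id_add {E : Type*} [NormedAddCommGroup E] [NormedSpace ℝ E]
    [FiniteDimensional ℝ E] {h : E → E} {c : ℝ≥0} (hc : c < 1) (hh : LipschitzWith c h)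
    {s : Set E} (h0 : ∀ x ∉ s, h x = 0) : BijOn (fun x => x + h x) s s := by
  have happ : ApproximatesLinearOn (fun x => x + h x)
      ((ContinuousLinearEquiv.refl ℝ E : E ≃L[ℝ] E) : E →L[ℝ] E) univ c := by
    intro x _ y _
    have := hh.dist_le_mul x y
    rw [dist_eq_norm, dist_eq_norm] at this
    change ‖x + h x - (y + h y) - (x - y)‖ ≤ _
    rwa [show x + h x - (y + h y) - (x - y) = h x - h y by abel]
  have hN : Subsingleton E ∨
      c < ‖((ContinuousLinearEquiv.refl ℝ E).symm : E →L[ℝ] E)‖₊⁻¹ := by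
    rcases subsingleton_or_nontrivial E with hE | hE
    · exact Or.inl hE
    · right
      have : ((ContinuousLinearEquiv.refl ℝ E).symm : E →L[ℝ] E) =
        ContinuousLinearMap.id ℝ E := rfl
      rw [this, ContinuousLinearMap.nnnorm_id]
      simpa using hc
  have hinj := happ.injOn hN
  have hsurj := happ.surjective hN
  refine ⟨fun x hx => ?_, hinj.mono (subset_univ _), fun y hy => ?_⟩
  · by_contra hx'
    have : x + h x = x := hinj (mem_univ _) (mem_univ _) (by simp [h0 _ hx'])
    change x + h x ∉ s at hx'
    rw [this] at hx'
    exact hx' hx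
  · obtain ⟨x, rfl⟩ := hsurj y
    refine ⟨x, ?_, rfl⟩
    by_contra hx
    simp [h0 x hx] at hy
    exact hx hy

/-- A Lipschitz map which is the identity off the unit ball and differentiable in it cannot have
singular derivative throughout the ball. -/
theorem LipschitzWith.exists_det_ne_zero {E : Type*} [NormedAddCommGroup E] [NormedSpace ℝ E]
    [FiniteDimensional ℝ E] {g : E → E} {K : ℝ≥0} (hg : LipschitzWith K g)
    (h0 : ∀ x ∉ ball (0 : E) 1, g x = 0) {A : E → E →L[ℝ] E}
    (hA : ∀ x ∈ ball (0 : E) 1, HasFDerivAt g (A x) x) :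
    ∃ x ∈ ball (0 : E) 1, LinearMap.det (1 + (A x : E →ₗ[ℝ] E)) ≠ 0 := by
  let _ : MeasurableSpace E := borel E
  have : BorelSpace E := ⟨rfl⟩
  let μ : Measure E := Measure.addHaar
  set B := ball (0 : E) 1
  have hBm : MeasurableSet B := isOpen_ball.measurableSet
  have hBfin : μ B ≠ ⊤ := measure_ball_lt_top.ne
  have hBpos : 0 < μ.real B :=
    ENNReal.toReal_pos (isOpen_ball.measure_pos μ ⟨0, by simp⟩).ne' hBfin
  have key : ∀ t : ℝ, 0 ≤ t → t * K < 1 →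
      IntegrableOn (fun x => LinearMap.det (1 + t • (A x : E →ₗ[ℝ] E))) B μ ∧
      ∫ x in B, LinearMap.det (1 + t • (A x : E →ₗ[ℝ] E)) ∂μ = μ.real B := by
    intro t ht htK
    have hlip : LipschitzWith (⟨t, ht⟩ * K) (fun x => t • g x) := by
      refine LipschitzWith.of_dist_le_mul fun x y => ?_
      rw [dist_smul₀, Real.norm_of_nonneg ht]
      calc t * dist (g x) (g y) ≤ t * (K * dist x y) := by
            gcongr
            exact hg.dist_le_mul x y
        _ = _ := (mul_assoc t (K : ℝ) _).symm
    have hbij := hlip.bijOn_id_add (s := B) htK fun x hx => by simp [h0 x hx]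
    have hder : ∀ x ∈ B, HasFDerivWithinAt (fun x => x + t • g x)
        (ContinuousLinearMap.id ℝ E + t • A x) B x := fun x hx =>
      ((hasFDerivAt_id x).add ((hA x hx).const_smul t)).hasFDerivWithinAt
    have hdet : EqOn (fun x => |(ContinuousLinearMap.id ℝ E + t • A x).det| • (1 : ℝ))
        (fun x => LinearMap.det (1 + t • (A x : E →ₗ[ℝ] E))) B := by
      intro x hx
      have hpos := LinearMap.det_one_add_smul_pos (A x) ht (by
        rw [norm_smul, Real.norm_of_nonneg ht]
        exact lt_of_le_of_lt (mul_le_mul_of_nonneg_left ((hA x hx).le_of_lipschitz hg) ht) htK)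
      simp only [smul_eq_mul, mul_one]
      exact abs_of_pos hpos
    constructor
    · refine IntegrableOn.congr_fun ?_ hdet hBm
      rw [← integrableOn_image_iff_integrableOn_abs_det_fderiv_smul μ hBm hder hbij.injOn
          fun _ => (1 : ℝ),
        hbij.image_eq]
      exact integrableOn_const hBfin
    · rw [← setIntegral_congr_fun hBm hdet,
        ← integral_image_eq_integral_abs_det_fderiv_smul μ hBm hder hbij.injOn fun _ => (1 : ℝ),
        hbij.image_eq]
      simp
  by_contra! hsing
  let s := Finset.range (Module.finrank ℝ E + 1)
  let v : ℕ → ℝ := fun i => (((i : ℝ) + 1) * (K + 1))⁻¹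
  have hv0 : ∀ i, 0 ≤ v i := fun i => by positivity
  have hvK : ∀ i, v i * K < 1 := fun i => by
    have : 0 < ((i : ℝ) + 1) * (K + 1) := by positivity
    rw [inv_mul_lt_iff₀ this]
    have : (0 : ℝ) ≤ i * K := by positivity
    have : (0 : ℝ) ≤ i := by positivity
    linarith
  have hvinj : InjOn v s := by
    intro i _ j _ hij
    have h1 := inv_injective hij
    have h2 : (K : ℝ) + 1 ≠ 0 := by positivity
    have h3 := mul_right_cancel₀ h2 h1
    exact_mod_cast add_right_cancel h3
  have hinterp : ∀ x ∈ B, ∑ i ∈ s, LinearMap.det (1 + v i • (A x : E →ₗ[ℝ] E)) *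
      (Lagrange.basis s v i).eval 1 = 0 := by
    intro x hx
    obtain ⟨p, hpd, hp⟩ := (A x : E →ₗ[ℝ] E).exists_polynomial_eval_eq_det_one_add_smul
    have h1 : p.degree < s.card := by
      refine lt_of_le_of_lt Polynomial.degree_le_natDegree ?_
      simp only [s, Finset.card_range]
      exact_mod_cast Nat.lt_succ_of_le hpd
    have h2 := congrArg (Polynomial.eval 1) (Lagrange.eq_interpolate hvinj h1)
    rw [hp, one_smul, hsing x hx] at h2
    simpa [Lagrange.interpolate_apply, Polynomial.eval_finsetSum, hp] using h2.symm
  have hsum : ∑ i ∈ s, (Lagrange.basis s v i).eval 1 = 1 := by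
    rw [← Polynomial.eval_finsetSum, Lagrange.sum_basis hvinj ⟨0, by simp [s]⟩]
    simp
  have hint := setIntegral_congr_fun (μ := μ) hBm hinterp
  simp only [integral_zero] at hint
  rw [integral_finsetSum _ fun i _ => (key _ (hv0 i) (hvK i)).1.mul_const _] at hint
  simp only [integral_mul_const, (key _ (hv0 _) (hvK _)).2, ← Finset.mul_sum, hsum] at hint
  linarith

/-- Extension by zero preserves Lipschitz continuity when the map vanishes on the sphere. -/
theorem LipschitzOnWith.indicator_closedBall {E : Type*} [NormedAddCommGroup E] [NormedSpace ℝ E]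
    {g : E → E} {K : ℝ≥0}
    (hg : LipschitzOnWith K g (closedBall 0 1)) (h0 : ∀ x ∈ sphere (0 : E) 1, g x = 0) :
    LipschitzWith K (indicator (closedBall 0 1) g) := by
  have mixed : ∀ x ∈ closedBall (0 : E) 1, ∀ y ∉ closedBall (0 : E) 1,
      dist (g x) 0 ≤ K * dist x y := by
    intro x hx y hy
    rw [mem_closedBall_zero_iff] at hx hy
    obtain ⟨t, ht, htn⟩ := intermediate_value_Icc (zero_le_one' ℝ)
      (f := fun t : ℝ => ‖AffineMap.lineMap x y t‖) (by fun_prop)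
      (show (1 : ℝ) ∈ Icc _ _ by simpa using ⟨hx, (not_le.1 hy).le⟩)
    set z := AffineMap.lineMap x y t
    have hz : z ∈ sphere (0 : E) 1 := by simpa using htn
    calc dist (g x) 0 = dist (g x) (g z) := by rw [h0 z hz]
      _ ≤ K * dist x z := hg.dist_le_mul x (by simpa using hx) z (sphere_subset_closedBall hz)
      _ ≤ K * dist x y := by
        gcongr
        rw [dist_left_lineMap, Real.norm_of_nonneg ht.1]
        exact mul_le_of_le_one_left dist_nonneg ht.2
  refine LipschitzWith.of_dist_le_mul fun x y => ?_
  by_cases hx : x ∈ closedBall (0 : E) 1 <;> by_cases hy : y ∈ closedBall (0 : E) 1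
  · simpa only [indicator_of_mem hx, indicator_of_mem hy] using hg.dist_le_mul x hx y hy
  · simpa only [indicator_of_mem hx, indicator_of_notMem hy] using mixed x hx y hy
  · simpa only [indicator_of_mem hy, indicator_of_notMem hx, dist_comm] using mixed y hy x hx
  · simp only [indicator_of_notMem hx, indicator_of_notMem hy, dist_self]
    positivity

section

variable {E : Type*} [NormedAddCommGroup E] [InnerProductSpace ℝ E]

/-- The displacement from `x` to the point where the ray from `G x` through `x` leaves the unit
sphere. -/
noncomputable def rayDisplacement (G : E → E) (x : E) : E :=
  ((-inner ℝ x (x - G x) + √(inner ℝ x (x - G x) ^ 2 + ‖x - G x‖ ^ 2 * (1 - ‖x‖ ^ 2))) /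
    ‖x - G x‖ ^ 2) • (x - G x)

theorem rayDisplacement_discriminant_pos {x y : E} (hx : ‖x‖ ≤ 1) (hy : ‖y‖ ≤ 1) (hxy : x - y ≠ 0) :
    0 < inner ℝ x (x - y) ^ 2 + ‖x - y‖ ^ 2 * (1 - ‖x‖ ^ 2) := by
  have hv : 0 < ‖x - y‖ ^ 2 := by positivity
  rcases hx.lt_or_eq with h | h
  · have : ‖x‖ ^ 2 < 1 := by nlinarith [norm_nonneg x]
    have : 0 < ‖x - y‖ ^ 2 * (1 - ‖x‖ ^ 2) := mul_pos hv (by linarith)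
    positivity
  · have h1 : inner ℝ x (x - y) = 1 - inner ℝ x y := by
      rw [inner_sub_right, real_inner_self_eq_norm_sq, h, one_pow]
    have h2 : ‖x - y‖ ^ 2 = 1 - 2 * inner ℝ x y + ‖y‖ ^ 2 := by
      rw [norm_sub_sq_real, h, one_pow]
    have h3 : ‖y‖ ^ 2 ≤ 1 := by nlinarith [norm_nonneg y]
    have h4 : 0 < inner ℝ x (x - y) := by linarith
    rw [h]
    nlinarith

theorem contDiffAt_rayDisplacement {G : E → E} (hG : ContDiff ℝ 1 G) (hb : ∀ x, ‖G x‖ ≤ 1) {x : E}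
    (hx : ‖x‖ ≤ 1) (hne : x - G x ≠ 0) : ContDiffAt ℝ 1 (rayDisplacement G) x := by
  have hv : ContDiffAt ℝ 1 (fun x => x - G x) x := contDiffAt_id.sub hG.contDiffAt
  have hi : ContDiffAt ℝ 1 (fun x => inner ℝ x (x - G x)) x := contDiffAt_id.inner ℝ hv
  have hn : ContDiffAt ℝ 1 (fun x => ‖x - G x‖ ^ 2) x := hv.norm_sq ℝ
  have hq : ContDiffAt ℝ 1 (fun x : E => ‖x‖ ^ 2) x := contDiffAt_id.norm_sq ℝ
  refine ((hi.neg.add (ContDiffAt.sqrt ((hi.pow 2).add (hn.mul (contDiffAt_const.sub hq))) ?_)).div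
    hn ?_).smul hv
  · exact (rayDisplacement_discriminant_pos hx (hb x) hne).ne'
  · simpa using hne

theorem norm_add_rayDisplacement {G : E → E} {x : E} (hb : ‖G x‖ ≤ 1) (hx : ‖x‖ ≤ 1)
    (hne : x - G x ≠ 0) : ‖x + rayDisplacement G x‖ ^ 2 = 1 := by
  have hD := Real.sq_sqrt (rayDisplacement_discriminant_pos hx hb hne).le
  have hv : ‖x - G x‖ ≠ 0 := norm_ne_zero_iff.2 hne
  rw [rayDisplacement, norm_add_sq_real, inner_smul_right, norm_smul, mul_pow, Real.norm_eq_abs,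
    sq_abs]
  field_simp
  linear_combination hD

theorem rayDisplacement_eq_zero {G : E → E} {x : E} (hb : ‖G x‖ ≤ 1) (hx : ‖x‖ = 1) :
    rayDisplacement G x = 0 := by
  have h : 0 ≤ inner ℝ x (x - G x) := by
    have := real_inner_le_norm x (G x)
    rw [inner_sub_right, real_inner_self_eq_norm_sq, hx, one_pow]
    rw [hx, one_mul] at this
    linarith
  simp [rayDisplacement, hx, Real.sqrt_sq h]

/-- **Brouwer's fixed point theorem** for continuously differentiable maps into the unit ball. -/
theorem exists_fixedPoint_of_contDiff_of_norm_le_one [FiniteDimensional ℝ E] {G : E → E}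
    (hG : ContDiff ℝ 1 G) (hb : ∀ x, ‖G x‖ ≤ 1) : ∃ x, G x = x := by
  by_contra! hne
  have hne' : ∀ x, x - G x ≠ 0 := fun x => sub_ne_zero.2 (hne x).symm
  set g := rayDisplacement G
  have hg : ∀ x ∈ closedBall (0 : E) 1, ContDiffAt ℝ 1 g x := fun x hx =>
    contDiffAt_rayDisplacement hG hb (by simpa using hx) (hne' x)
  obtain ⟨K, hK⟩ := LocallyLipschitzOn.exists_lipschitzOnWith_of_compact
    (isCompact_closedBall (0 : E) 1)
    (ContDiffOn.locallyLipschitzOn (convex_closedBall _ _) fun x hx => (hg x hx).contDiffWithinAt)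
  have hzero : ∀ x ∈ sphere (0 : E) 1, g x = 0 := fun x hx =>
    rayDisplacement_eq_zero (hb x) (by simpa using hx)
  obtain ⟨x, hx, hdet⟩ := (hK.indicator_closedBall hzero).exists_det_ne_zero (A := fderiv ℝ g)
    (fun x hx => by
      by_cases hx' : x ∈ closedBall (0 : E) 1
      · rw [indicator_of_mem hx']
        exact hzero x (by simpa using le_antisymm (by simpa using hx') (by simpa using hx))
      · exact indicator_of_notMem hx' _)
    (fun x hx => by
      refine ((hg x (ball_subset_closedBall hx)).differentiableAt one_ne_zero).hasFDerivAt
        |>.congr_of_eventuallyEq ?_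
      filter_upwards [isOpen_ball.mem_nhds hx] with y hy
      exact indicator_of_mem (ball_subset_closedBall hy) _)
  have hder : HasFDerivAt (fun y => y + g y) (ContinuousLinearMap.id ℝ E + fderiv ℝ g x) x :=
    (hasFDerivAt_id x).add
      ((hg x (ball_subset_closedBall hx)).differentiableAt one_ne_zero).hasFDerivAt
  have hconst : HasFDerivAt (fun y => ‖y + g y‖ ^ 2) (0 : E →L[ℝ] ℝ) x := by
    refine (hasFDerivAt_const (1 : ℝ) x).congr_of_eventuallyEq ?_
    filter_upwards [isOpen_ball.mem_nhds hx] with y hy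
    exact norm_add_rayDisplacement (hb y) (by simpa using (ball_subset_closedBall hy)) (hne' y)
  have horth := hder.norm_sq.unique hconst
  obtain ⟨w, hw⟩ := (LinearMap.equivOfDetNeZero _ hdet).surjective (x + g x)
  have hw' : w + fderiv ℝ g x w = x + g x := hw
  have h1 := norm_add_rayDisplacement (hb x) (by simpa using (ball_subset_closedBall hx)) (hne' x)
  have h2 : (2 : ℕ) • inner ℝ (x + g x) (w + fderiv ℝ g x w) = 0 :=
    congrArg (fun L : E →L[ℝ] ℝ => L w) horth
  rw [hw', real_inner_self_eq_norm_sq, h1] at h2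
  simp at h2

end

/-- **Brouwer's fixed point theorem**, approximate version: a continuous self-map of a nonempty
compact convex subset of a finite-dimensional space has approximate fixed points. -/
theorem Convex.exists_dist_lt_of_mapsTo {V : Type*} [NormedAddCommGroup V] [NormedSpace ℝ V]
    [FiniteDimensional ℝ V] {D : Set V} (hconv : Convex ℝ D) (hcomp : IsCompact D)
    (hne : D.Nonempty) {F : V → V} (hF : ContinuousOn F D) (hm : MapsTo F D D) {ε : ℝ}
    (hε : 0 < ε) : ∃ y ∈ D, dist (F y) y < ε := by
  obtain ⟨p, hp⟩ := exists_contMDiffMap_forall_mem_convex_of_local_const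
    (modelWithCornersSelf ℝ V) (t := fun x => D ∩ ball x (infDist x D + ε / 2)) (n := 1)
    (fun x => hconv.inter (convex_ball _ _)) (fun x => by
      obtain ⟨c, hc, hcx⟩ := (infDist_lt_iff hne).1
        (show infDist x D < infDist x D + ε / 2 by linarith)
      have : ∀ᶠ y in nhds x, dist y c < infDist y D + ε / 2 :=
        ContinuousAt.eventually_lt (by fun_prop)
          ((continuous_infDist_pt D).add continuous_const).continuousAt hcx
      exact ⟨c, this.mono fun y hy => ⟨hc, by rwa [mem_ball, dist_comm]⟩⟩)
  have hFp : Continuous fun x => F (p x) :=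
    hF.comp_continuous p.contMDiff.continuous fun x => (hp x).1
  obtain ⟨G, hG⟩ := exists_contMDiffMap_forall_mem_convex_of_local_const
    (modelWithCornersSelf ℝ V) (t := fun x => D ∩ ball (F (p x)) (ε / 2)) (n := 1)
    (fun x => hconv.inter (convex_ball _ _)) (fun x => by
      have : ∀ᶠ y in nhds x, dist (F (p x)) (F (p y)) < ε / 2 :=
        ContinuousAt.eventually_lt (continuous_const.dist hFp).continuousAt continuousAt_const
          (by simpa using hε)
      exact ⟨F (p x), this.mono fun y hy => ⟨hm (hp x).1, hy⟩⟩)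
  let e : V ≃L[ℝ] EuclideanSpace ℝ (Fin (Module.finrank ℝ V)) := toEuclidean
  obtain ⟨R, hR0, hR⟩ := (hcomp.image e.continuous).isBounded.exists_pos_norm_le
  have hsmooth : ContDiff ℝ 1 fun u => R⁻¹ • e (G (e.symm (R • u))) :=
    (e.contDiff.comp (G.contMDiff.contDiff.comp
      (e.symm.contDiff.comp (contDiff_id.const_smul R)))).const_smul R⁻¹
  obtain ⟨u, hu⟩ := exists_fixedPoint_of_contDiff_of_norm_le_one hsmooth fun u => by
    rw [norm_smul, norm_inv, Real.norm_of_nonneg hR0.le, inv_mul_le_iff₀ hR0, mul_one]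
    exact hR _ (mem_image_of_mem _ (hG _).1)
  set x := e.symm (R • u)
  have hx : G x = x := by
    apply e.injective
    rw [e.apply_symm_apply, ← hu, smul_inv_smul₀ hR0.ne']
  have hGx := hG x
  rw [hx] at hGx
  have hpx := hp x
  rw [infDist_zero_of_mem hGx.1, zero_add] at hpx
  refine ⟨p x, hpx.1, ?_⟩
  calc dist (F (p x)) (p x) ≤ dist x (F (p x)) + dist (p x) x := by
        rw [dist_comm x, dist_comm (p x) x]
        exact dist_triangle _ _ _
    _ < ε / 2 + ε / 2 := add_lt_add hGx.2 hpx.2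
    _ = ε := add_halves ε

/-- **Brouwer's fixed point theorem** for a nonempty compact convex subset of a finite-dimensional
space. -/
theorem Convex.exists_fixedPoint_of_mapsTo {V : Type*} [NormedAddCommGroup V] [NormedSpace ℝ V]
    [FiniteDimensional ℝ V] {D : Set V} (hconv : Convex ℝ D) (hcomp : IsCompact D)
    (hne : D.Nonempty) {F : V → V} (hF : ContinuousOn F D) (hm : MapsTo F D D) :
    ∃ y ∈ D, F y = y := by
  obtain ⟨y, hy, hmin⟩ := hcomp.exists_isMinOn hne 
    (continuous_dist.comp_continuousOn (hF.prodMk continuousOn_id))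
  refine ⟨y, hy, dist_le_zero.1 (le_of_forall_pos_le_add fun ε hε => ?_)⟩
  obtain ⟨z, hz, hzε⟩ := hconv.exists_dist_lt_of_mapsTo hcomp hne hF hm hε
  rw [zero_add]
  exact (hmin hz).trans hzε.le

theorem Relation.ReflTransGen.exists_chain {α : Type*} {r : α → α → Prop} {a b : α}
    (h : Relation.ReflTransGen r a b) :
    ∃ (k : ℕ) (f : ℕ → α), f 0 = a ∧ f k = b ∧ ∀ i < k, r (f i) (f (i + 1)) := by
  induction h with
  | refl => exact ⟨0, fun _ => a, rfl, rfl, by simp⟩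
  | @tail b c _ hbc ih =>
    obtain ⟨k, f, h0, hk, hf⟩ := ih
    refine ⟨k + 1, fun i => if i ≤ k then f i else c, by simp [h0], by simp, fun i hi => ?_⟩
    rcases (Nat.lt_succ_iff.1 hi).lt_or_eq with h | rfl
    · simpa [h.le, Nat.succ_le_of_lt h] using hf i h
    · simpa [hk] using hbc

/-- along the linear homotopy F_t = (1−t)F₀ + tF₁ between two continuous
self-maps of a nonempty compact convex D ⊆ ℝ^d (with the L∞ norm), for every ε > 0 there
is a finite chain of ε-approximate fixpoints of intermediate maps, starting with an
ε-approximate fixpoint of F₀ and ending with one of F₁, in which consecutive parameters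
and consecutive points are at most ε apart. -/
theorem chain_of_approx_fixpoints (d : ℕ) (D : Set (Fin d → ℝ))
    (hne : D.Nonempty) (hcomp : IsCompact D) (hconv : Convex ℝ D)
    (F0 F1 : (Fin d → ℝ) → Fin d → ℝ)
    (hc0 : ContinuousOn F0 D) (hc1 : ContinuousOn F1 D)
    (hm0 : Set.MapsTo F0 D D) (hm1 : Set.MapsTo F1 D D) :
    ∀ ε > (0 : ℝ), ∃ (k : ℕ) (t : Fin (k + 1) → ℝ) (x : Fin (k + 1) → Fin d → ℝ),
      t 0 = 0 ∧ t (Fin.last k) = 1 ∧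
      (∀ i, t i ∈ Set.Icc (0 : ℝ) 1) ∧
      (∀ i, x i ∈ D) ∧
      (∀ i, dist ((1 - t i) • F0 (x i) + t i • F1 (x i)) (x i) ≤ ε) ∧
      (∀ i : Fin k, |t i.succ - t i.castSucc| ≤ ε ∧ dist (x i.succ) (x i.castSucc) ≤ ε) := by
  intro ε hε
  let H : ℝ × (Fin d → ℝ) → Fin d → ℝ := fun p => (1 - p.1) • F0 p.2 + p.1 • F1 p.2
  let Q : Set (ℝ × (Fin d → ℝ)) := Set.Icc 0 1 ×ˢ D
  have hQcomp : IsCompact Q := isCompact_Icc.prod hcomp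
  have hQsnd : MapsTo Prod.snd Q D := fun p hp => hp.2
  have hH : ContinuousOn H Q :=
    ((continuousOn_const.sub continuousOn_fst).smul (hc0.comp continuousOn_snd hQsnd)).add
      (continuousOn_fst.smul (hc1.comp continuousOn_snd hQsnd))
  have hHm : MapsTo H Q D := fun p hp =>
    hconv (hm0 hp.2) (hm1 hp.2) (by linarith [hp.1.2]) hp.1.1 (by ring)
  let S : Set (ℝ × (Fin d → ℝ)) := {p | p ∈ Q ∧ dist (H p) p.2 ≤ ε}
  have hS : IsClosed S :=
    (continuous_dist.comp_continuousOn (hH.prodMk continuousOn_snd)).preimage_isClosed_of_isClosed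
      hQcomp.isClosed isClosed_Iic
  let r : ℝ × (Fin d → ℝ) → ℝ × (Fin d → ℝ) → Prop := fun p q => q ∈ S ∧ dist q p ≤ ε
  let U : Set (ℝ × (Fin d → ℝ)) := {p | ∃ q ∈ S, q.1 = 0 ∧ Relation.ReflTransGen r q p}
  have hUS : U ⊆ S := by
    rintro p ⟨q, hq, -, hqp⟩
    rcases hqp.cases_tail with rfl | ⟨_, -, h⟩
    exacts [hq, h.1]
  have hstep : ∀ p ∈ U, ∀ q ∈ S, dist q p ≤ ε → q ∈ U := by
    rintro p ⟨o, ho, ho0, hop⟩ q hq hqp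
    exact ⟨o, ho, ho0, hop.tail ⟨hq, hqp⟩⟩
  have hU : IsClosed U := isClosed_of_closure_subset fun p hp => by
    obtain ⟨q, hq, hpq⟩ := mem_closure_iff.1 hp ε hε
    exact hstep q hq p (hS.closure_subset_iff.2 hUS hp) hpq.le
  have hV : IsClosed (S \ U) := isClosed_of_closure_subset fun p hp => by
    obtain ⟨q, hq, hpq⟩ := mem_closure_iff.1 hp ε hε
    have hpS := hS.closure_subset_iff.2 sdiff_subset hp
    refine ⟨hpS, fun hpU => hq.2 (hstep p hpU q hq.1 ?_)⟩
    rw [dist_comm]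
    exact hpq.le
  obtain ⟨φ, hφV, hφU, hφ⟩ := exists_continuous_zero_one_of_isClosed hV hU disjoint_sdiff_left
  obtain ⟨z, hz, hzfix⟩ := ((convex_Icc (0 : ℝ) 1).prod hconv).exists_fixedPoint_of_mapsTo hQcomp
    ((nonempty_Icc.2 zero_le_one).prod hne) (F := fun p => (φ p, H p))
    (φ.continuous.continuousOn.prodMk hH) (fun p hp => ⟨hφ p, hHm hp⟩)
  have hz1 : φ z = z.1 := congrArg Prod.fst hzfix
  have hz2 : H z = z.2 := congrArg Prod.snd hzfix
  have hzS : z ∈ S := ⟨hz, by rw [hz2, dist_self]; exact hε.le⟩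
  have hzU : z ∈ U := by
    by_contra hzU
    exact hzU ⟨z, hzS, hz1.symm.trans (hφV ⟨hzS, hzU⟩), .refl⟩
  have hz1' : z.1 = 1 := hz1.symm.trans (hφU hzU)
  obtain ⟨q, hq, hq0, hqz⟩ := hzU
  obtain ⟨k, f, hf0, hfk, hf⟩ := hqz.exists_chain
  have hfS : ∀ i ≤ k, f i ∈ S := by
    intro i hi
    cases i with
    | zero => rwa [hf0]
    | succ j => exact (hf j hi).1
  have hfS' : ∀ i : Fin (k + 1), f i ∈ S := fun i => hfS i i.is_le
  refine ⟨k, fun i => (f i).1, fun i => (f i).2, by simpa [hf0] using hq0, by simpa [hfk] using hz1',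
    fun i => (hfS' i).1.1, fun i => (hfS' i).1.2, fun i => (hfS' i).2, fun i => ?_⟩
  have h := (hf i i.2).2
  rw [Prod.dist_eq, max_le_iff, Real.dist_eq] at h
  simpa using h
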